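/- arXiv:1711.00680 — 2 statements merged into one kernel-verified Lean document; each statement's English description precedes it below -/
import Mathlib

section
/- Let p, q, r be three distinct elements of V, and consider the three conditions: (1) 𝔛_{\{p,q,r\}} is strictly collapsible over {p} into 𝔛_{\{q,r\}} with respect to λ_{\{q\}}^{\{p,q,r\}} and λ_{\{r\}}^{\{p,q,r\}}; (2) strictly collapsible over {q} into 𝔛_{\{p,r\}} with respect to λ_{\{p\}}^{\{p,q,r\}} and λ_{\{r\}}^{\{p,q,r\}}; (3) strictly collapsible over {r} into 𝔛_{\{p,q\}} with respect to λ_{\{p\}}^{\{p,q,r\}} and λ_{\{q\}}^{\{p,q,r\}}. Then for any two distinct conditions among (1), (2), (3), their conjunction holds if and only if X_p, X_q, X_r are mutually independent, i.e., p_{\{p,q,r\}}(x) = p_{\{p\}}(x_p)·p_{\{q\}}(x_q)·p_{\{r\}}(x_r) for all x. -/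
open Finset

variable {V : Type*} [Fintype V] [DecidableEq V]
variable {𝔛 : V → Type*} [∀ v, Fintype (𝔛 v)] [∀ v, DecidableEq (𝔛 v)]
  [∀ v, Nonempty (𝔛 v)]

/-- The marginal `p_A` of a distribution `p` on the full table, evaluated at the
`A`-coordinates of `x`. -/
noncomputable def margin (p : (∀ v, 𝔛 v) → ℝ) (A : Finset V) (x : ∀ v, 𝔛 v) : ℝ :=
  ∑ y ∈ Finset.univ.filter (fun y : ∀ v, 𝔛 v => ∀ v ∈ A, y v = x v), p y

/-- `ν_L^M(x_L) = (1/|𝔛_{M∖L}|) Σ_{j ∈ 𝔛_M : j_L = x_L} log p_M(j)`, written with sums over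
full configurations (for `L ⊆ M` the extra coordinates cancel against the normalization). -/
noncomputable def nu (p : (∀ v, 𝔛 v) → ℝ) (L M : Finset V) (x : ∀ v, 𝔛 v) : ℝ :=
  (∏ v ∈ Lᶜ, (Fintype.card (𝔛 v) : ℝ))⁻¹ *
    ∑ j ∈ Finset.univ.filter (fun j : ∀ v, 𝔛 v => ∀ v ∈ L, j v = x v),
      Real.log (margin p M j)

/-- The marginal log-linear parameter `λ_L^M(x_L) = Σ_{L' ⊆ L} (−1)^{|L∖L'|} ν_{L'}^M(x_{L'})`. -/
noncomputable def mll (p : (∀ v, 𝔛 v) → ℝ) (L M : Finset V) (x : ∀ v, 𝔛 v) : ℝ :=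
  ∑ L' ∈ L.powerset, (-1 : ℝ) ^ ((L \ L').card) * nu p L' M x

/-- `𝔛_N` is strictly collapsible over `N ∖ M'` into `𝔛_{M'}` with respect to `λ_L^N`:
`λ_L^{M'} = λ_L^N` and `λ_Z^N = 0` for every `Z ⊆ N` with `L ⊊ Z` meeting `N ∖ M'`. -/
def StrictlyCollapsible (p : (∀ v, 𝔛 v) → ℝ) (N M' L : Finset V) : Prop :=
  (∀ x : ∀ v, 𝔛 v, mll p L M' x = mll p L N x) ∧
  (∀ Z ⊆ N, L ⊂ Z → (Z ∩ (N \ M')).Nonempty → ∀ x : ∀ v, 𝔛 v, mll p Z N x = 0)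

/-!
If `X_v`, `v ∈ N`, are mutually independent, `log p_N` is a sum of functions of one coordinate each,
and the interaction `λ_Z` of a function that ignores some coordinate in `Z` is zero; hence
`λ_Z^N = 0` for `|Z| ≥ 2`, and `λ_{b}^M = λ_{b}^{b}` for every `M ⊆ N` containing `b`. Conversely,
Möbius inversion writes `log p_N` as the sum of its interactions, so if those with `|Z| ≥ 2` vanish
then `p_N` is a product of functions of one coordinate each, and these are the one-dimensional
marginals up to normalization. Strict collapsibility over `{w}` with respect to `λ_{b}` for every
`b ≠ w` kills all `λ_Z^N` with `w ∈ Z`, `|Z| ≥ 2`, so it is enough to have it for all `w ∈ N` but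
one.
-/

open Function (update)

section MoebiusTransform

variable {ι R : Type*} [DecidableEq ι] [CommRing R]

/-- The Möbius transform of a set function `φ` on the Boolean lattice of finite sets: it takes
`L ↦ ν_L^M(x)` to `L ↦ λ_L^M(x)`. -/
def moebiusTransform (φ : Finset ι → R) (Z : Finset ι) : R :=
  ∑ L ∈ Z.powerset, (-1) ^ #(Z \ L) * φ L

theorem moebiusTransform_insert (φ : Finset ι → R) {a : ι} {Z : Finset ι} (ha : a ∉ Z) :
    moebiusTransform φ (insert a Z) =
      moebiusTransform (fun L ↦ φ (insert a L)) Z - moebiusTransform φ Z := by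
  unfold moebiusTransform
  rw [sum_powerset_insert ha, add_comm, sub_eq_add_neg, ← sum_neg_distrib]
  congr 1 <;> refine sum_congr rfl fun L hL ↦ ?_ <;>
    have haL : a ∉ L := fun h ↦ ha (mem_powerset.1 hL h)
  · rw [insert_sdiff_insert, sdiff_insert_of_notMem ha]
  · rw [insert_sdiff_of_notMem _ haL, card_insert_of_notMem (by simp [ha]), pow_succ]
    ring

theorem sum_powerset_moebiusTransform (φ : Finset ι → R) (N : Finset ι) :
    ∑ Z ∈ N.powerset, moebiusTransform φ Z = φ N := by
  induction N using Finset.induction_on generalizing φ with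
  | empty => simp [moebiusTransform]
  | insert a N ha ih =>
    have insert_eq : ∀ Z ∈ N.powerset, moebiusTransform φ (insert a Z) =
        moebiusTransform (fun L ↦ φ (insert a L)) Z - moebiusTransform φ Z :=
      fun Z hZ ↦ moebiusTransform_insert φ fun h ↦ ha (mem_powerset.1 hZ h)
    rw [sum_powerset_insert ha, sum_congr rfl insert_eq, sum_sub_distrib, ih, ih]
    ring

theorem moebiusTransform_sum {κ : Type*} (s : Finset κ) (φ : κ → Finset ι → R) (Z : Finset ι) :
    moebiusTransform (fun L ↦ ∑ k ∈ s, φ k L) Z = ∑ k ∈ s, moebiusTransform (φ k) Z := by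
  simp only [moebiusTransform, mul_sum]
  exact sum_comm

end MoebiusTransform

section Margin

omit [∀ v, Nonempty (𝔛 v)]

theorem dependsOn_margin (p : (∀ v, 𝔛 v) → ℝ) (A : Finset V) : DependsOn (margin p A) A := by
  intro x y h
  unfold margin
  congr 1
  exact filter_congr fun z _ ↦ forall₂_congr fun v hv ↦ by rw [h v hv]

theorem margin_pos {p : (∀ v, 𝔛 v) → ℝ} (hp : ∀ x, 0 < p x) (A : Finset V) (x : ∀ v, 𝔛 v) :
    0 < margin p A x :=
  sum_pos (fun y _ ↦ hp y) ⟨x, by simp⟩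

theorem margin_empty (p : (∀ v, 𝔛 v) → ℝ) (x : ∀ v, 𝔛 v) : margin p ∅ x = ∑ y, p y := by
  simp [margin]

theorem margin_univ (p : (∀ v, 𝔛 v) → ℝ) (x : ∀ v, 𝔛 v) : margin p univ x = p x := by
  simp [margin, ← funext_iff, filter_eq']

theorem sum_margin_insert_update (p : (∀ v, 𝔛 v) → ℝ) {a : V} {A : Finset V} (ha : a ∉ A)
    (x : ∀ v, 𝔛 v) : ∑ t, margin p (insert a A) (update x a t) = margin p A x := by
  unfold margin
  rw [← sum_fiberwise _ (fun y : ∀ v, 𝔛 v ↦ y a)]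
  refine sum_congr rfl fun t _ ↦ ?_
  rw [filter_filter]
  congr 1
  refine filter_congr fun z _ ↦ ?_
  rw [forall_mem_insert, Function.update_self, and_comm]
  refine and_congr_left fun _ ↦ forall₂_congr fun v hv ↦ ?_
  rw [Function.update_of_ne (ne_of_mem_of_not_mem hv ha)]

theorem sum_margin_singleton_update (p : (∀ v, 𝔛 v) → ℝ) (v : V) (x : ∀ v, 𝔛 v) :
    ∑ t, margin p {v} (update x v t) = ∑ y, p y :=
  (sum_margin_insert_update p (notMem_empty v) x).trans (margin_empty p x)

theorem margin_update_of_mem {g : (∀ v, 𝔛 v) → ℝ} {w : V} (hg : DependsOn g {w}ᶜ)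
    {A : Finset V} (hw : w ∈ A) (x : ∀ v, 𝔛 v) (t : 𝔛 w) :
    margin g A (update x w t) = margin g A x := by
  have update_agree {y z : ∀ v, 𝔛 v} (s : 𝔛 w) (h : ∀ v ∈ A, y v = z v) :
      ∀ v ∈ A, update y w s v = update z w s v := by
    intro v hv
    obtain rfl | hvw := eq_or_ne v w
    · simp
    · simpa [hvw] using h v hv
  unfold margin
  refine sum_nbij' (update · w (x w)) (update · w t) ?_ ?_ ?_ ?_ ?_
  · intro y hy
    simpa using update_agree (x w) (mem_filter.1 hy).2
  · intro y hy
    simpa using update_agree t (mem_filter.1 hy).2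
  · intro y hy
    have hyw : y w = t := by simpa using (mem_filter.1 hy).2 w hw
    simp [← hyw]
  · intro y hy
    simp [← (mem_filter.1 hy).2 w hw]
  · intro y _
    refine hg fun v hv ↦ ?_
    rw [Function.update_of_ne hv]

theorem margin_eq_card_mul_margin_insert {g : (∀ v, 𝔛 v) → ℝ} {w : V} (hg : DependsOn g {w}ᶜ)
    {A : Finset V} (hw : w ∉ A) (x : ∀ v, 𝔛 v) :
    margin g A x = Fintype.card (𝔛 w) * margin g (insert w A) x := by
  simp [← sum_margin_insert_update g hw, margin_update_of_mem hg (mem_insert_self w A)]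

theorem margin_eq_mul_prod_of_factorizes {p : (∀ v, 𝔛 v) → ℝ} {F : V → (∀ v, 𝔛 v) → ℝ}
    (hF : ∀ v, DependsOn (F v) {v}) {c : ℝ} {A D : Finset V} (hAD : Disjoint A D)
    (h : ∀ x, margin p (A ∪ D) x = c * ∏ v ∈ A ∪ D, F v x) (x : ∀ v, 𝔛 v) :
    margin p A x = c * (∏ v ∈ D, ∑ t, F v (update x v t)) * ∏ v ∈ A, F v x := by
  induction D using Finset.induction_on generalizing A x with
  | empty => simpa using h x
  | insert a D haD ih =>
    obtain ⟨haA, hAD⟩ := disjoint_insert_right.1 hAD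
    have margin_insert (t : 𝔛 a) : margin p (insert a A) (update x a t) =
        c * (∏ v ∈ D, ∑ s, F v (update x v s)) * (∏ v ∈ A, F v x) * F a (update x a t) := by
      rw [ih (disjoint_insert_left.2 ⟨haD, hAD⟩) (by simpa using h), prod_insert haA]
      have prod_A : ∏ v ∈ A, F v (update x a t) = ∏ v ∈ A, F v x :=
        prod_congr rfl fun v hv ↦ hF v (by simp [ne_of_mem_of_not_mem hv haA])
      have prod_D : ∏ v ∈ D, ∑ s, F v (update (update x a t) v s) =
          ∏ v ∈ D, ∑ s, F v (update x v s) :=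
        prod_congr rfl fun v _ ↦ sum_congr rfl fun s _ ↦ hF v (by simp)
      rw [prod_A, prod_D]
      ring
    rw [← sum_margin_insert_update p haA, sum_congr rfl fun t _ ↦ margin_insert t, ← mul_sum,
      prod_insert haD]
    ring

end Margin

section Interactions

omit [∀ v, Nonempty (𝔛 v)]

variable (p : (∀ v, 𝔛 v) → ℝ)

theorem nu_eq_inv_mul_margin (L M : Finset V) (x : ∀ v, 𝔛 v) :
    nu p L M x = (∏ v ∈ Lᶜ, (Fintype.card (𝔛 v) : ℝ))⁻¹ *
      margin (fun y ↦ Real.log (margin p M y)) L x :=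
  rfl

theorem mll_eq_moebiusTransform (Z M : Finset V) (x : ∀ v, 𝔛 v) :
    mll p Z M x = moebiusTransform (fun L ↦ nu p L M x) Z :=
  rfl

theorem dependsOn_nu (L M : Finset V) : DependsOn (nu p L M) L := by
  intro x y h
  rw [nu_eq_inv_mul_margin, nu_eq_inv_mul_margin, dependsOn_margin _ L h]

theorem dependsOn_mll (Z M : Finset V) : DependsOn (mll p Z M) Z := by
  intro x y h
  refine sum_congr rfl fun L hL ↦ ?_
  rw [dependsOn_nu p L M fun v hv ↦ h v (mem_powerset.1 hL hv)]

theorem nu_univ (M : Finset V) (x : ∀ v, 𝔛 v) : nu p univ M x = Real.log (margin p M x) := by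
  simp [nu_eq_inv_mul_margin, margin_univ]

theorem nu_insert_of_notMem {L M : Finset V} {w : V} (hM : w ∉ M) (hL : w ∉ L) (x : ∀ v, 𝔛 v) :
    nu p (insert w L) M x = nu p L M x := by
  have log_dependsOn : DependsOn (fun y ↦ Real.log (margin p M y)) {w}ᶜ := fun y z h ↦
    congrArg Real.log (dependsOn_margin p M fun v hv ↦ h v (ne_of_mem_of_not_mem hv hM))
  have card_ne_zero : (Fintype.card (𝔛 w) : ℝ) ≠ 0 :=
    Nat.cast_ne_zero.2 (Fintype.card_pos_iff.2 ⟨x w⟩).ne'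
  rw [nu_eq_inv_mul_margin, nu_eq_inv_mul_margin, margin_eq_card_mul_margin_insert log_dependsOn hL,
    ← mul_prod_erase Lᶜ _ (mem_compl.2 hL), compl_insert]
  field_simp

theorem mll_eq_zero_of_not_subset {Z M : Finset V} (h : ¬Z ⊆ M) (x : ∀ v, 𝔛 v) :
    mll p Z M x = 0 := by
  obtain ⟨w, hwZ, hwM⟩ := not_subset.1 h
  rw [mll_eq_moebiusTransform, ← insert_erase hwZ, moebiusTransform_insert _ (notMem_erase w Z),
    sub_eq_zero]
  refine sum_congr rfl fun L hL ↦ ?_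
  have hwL : w ∉ L := fun hw ↦ notMem_erase w Z (mem_powerset.1 hL hw)
  simp only [nu_insert_of_notMem p hwM hwL]

theorem sum_powerset_mll (N : Finset V) (x : ∀ v, 𝔛 v) :
    ∑ Z ∈ N.powerset, mll p Z N x = Real.log (margin p N x) := by
  rw [← nu_univ, ← sum_powerset_moebiusTransform (fun L ↦ nu p L N x) univ]
  refine sum_subset (powerset_mono.2 (subset_univ N)) fun Z _ hZ ↦ ?_
  exact mll_eq_zero_of_not_subset p (mt mem_powerset.2 hZ) x

end Interactions

/-- Mutual independence of the coordinates `X_v`, `v ∈ N`, under `p`, as factorization of the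
marginal `p_N` into one-dimensional marginals. -/
def IndependentOn (p : (∀ v, 𝔛 v) → ℝ) (N : Finset V) : Prop :=
  ∀ x, margin p N x = ∏ v ∈ N, margin p {v} x

section Independence

omit [∀ v, Nonempty (𝔛 v)]

variable {p : (∀ v, 𝔛 v) → ℝ} {N : Finset V}

theorem independentOn_of_factorizes (hsum : ∑ x, p x = 1) {F : V → (∀ v, 𝔛 v) → ℝ}
    (hF : ∀ v, DependsOn (F v) {v}) {c : ℝ} (h : ∀ x, margin p N x = c * ∏ v ∈ N, F v x) :
    IndependentOn p N := by
  intro x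
  let S (v : V) : ℝ := ∑ t, F v (update x v t)
  have total : c * ∏ v ∈ N, S v = 1 := by
    rw [← hsum, ← margin_empty p x,
      margin_eq_mul_prod_of_factorizes hF (disjoint_empty_left N) (by simpa using h),
      prod_empty, mul_one]
  have S_ne_zero : ∀ v ∈ N, S v ≠ 0 := prod_ne_zero_iff.1 (right_ne_zero_of_mul_eq_one total)
  have margin_singleton : ∀ v ∈ N, margin p {v} x = F v x / S v := by
    intro v hv
    have hN : {v} ∪ N.erase v = N := insert_erase hv
    rw [margin_eq_mul_prod_of_factorizes hF (D := N.erase v) (c := c) (by simp)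
      (by simpa only [hN] using h), prod_singleton, eq_div_iff (S_ne_zero v hv)]
    rw [← mul_prod_erase N S hv] at total
    linear_combination F v x * total
  rw [h, prod_congr rfl margin_singleton, prod_div_distrib,
    eq_div_iff (right_ne_zero_of_mul_eq_one total)]
  linear_combination (∏ v ∈ N, F v x) * total

theorem IndependentOn.mono {M : Finset V} (h : IndependentOn p N) (hsum : ∑ x, p x = 1)
    (hMN : M ⊆ N) : IndependentOn p M := by
  intro x
  rw [margin_eq_mul_prod_of_factorizes (p := p) (F := fun v ↦ margin p {v}) (c := 1) (A := M)
    (D := N \ M) (fun v ↦ by simpa using dependsOn_margin p {v}) disjoint_sdiff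
    (by simpa [union_sdiff_of_subset hMN, IndependentOn] using h)]
  simp [sum_margin_singleton_update, hsum]

theorem IndependentOn.mll_eq_sum (h : IndependentOn p N) (hp : ∀ x, 0 < p x) (Z : Finset V)
    (x : ∀ v, 𝔛 v) : mll p Z N x = ∑ v ∈ N, mll p Z {v} x := by
  have log_margin (y : ∀ v, 𝔛 v) :
      Real.log (margin p N y) = ∑ v ∈ N, Real.log (margin p {v} y) := by
    rw [h, Real.log_prod fun v _ ↦ (margin_pos hp {v} y).ne']
  have nu_eq_sum (L : Finset V) : nu p L N x = ∑ v ∈ N, nu p L {v} x := by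
    simp only [nu, log_margin, ← mul_sum]
    rw [sum_comm]
  simp only [mll_eq_moebiusTransform, nu_eq_sum, moebiusTransform_sum]

theorem IndependentOn.mll_singleton (h : IndependentOn p N) (hp : ∀ x, 0 < p x) {b : V}
    (hb : b ∈ N) (x : ∀ v, 𝔛 v) : mll p {b} N x = mll p {b} {b} x := by
  rw [h.mll_eq_sum hp, sum_eq_single_of_mem b hb]
  exact fun v _ hvb ↦ mll_eq_zero_of_not_subset p (by simpa using hvb.symm) x

theorem IndependentOn.mll_eq_zero (h : IndependentOn p N) (hp : ∀ x, 0 < p x) {Z : Finset V}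
    (hZ : 1 < #Z) (x : ∀ v, 𝔛 v) : mll p Z N x = 0 := by
  rw [h.mll_eq_sum hp]
  exact sum_eq_zero fun v _ ↦ mll_eq_zero_of_not_subset p
    (fun hZv ↦ hZ.not_ge (by simpa using card_le_card hZv)) x

theorem log_margin_eq_of_mll_eq_zero (h : ∀ Z ⊆ N, 1 < #Z → ∀ x, mll p Z N x = 0)
    (x : ∀ v, 𝔛 v) :
    Real.log (margin p N x) = mll p ∅ N x + ∑ v ∈ N, mll p {v} N x := by
  have small_subset : insert ∅ (N.image fun v ↦ {v}) ⊆ N.powerset := by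
    simp [insert_subset_iff, image_subset_iff]
  rw [← sum_powerset_mll, ← sum_subset small_subset, sum_insert (by simp),
    sum_image (by simp)]
  intro Z hZN hZ
  refine h Z (mem_powerset.1 hZN) ?_ x
  contrapose! hZ
  obtain h₀ | h₁ := Nat.le_one_iff_eq_zero_or_eq_one.1 hZ
  · simp [card_eq_zero.1 h₀]
  · obtain ⟨v, rfl⟩ := card_eq_one.1 h₁
    simpa using hZN

theorem independentOn_of_mll_eq_zero (hp : ∀ x, 0 < p x) (hsum : ∑ x, p x = 1)
    (h : ∀ Z ⊆ N, 1 < #Z → ∀ x, mll p Z N x = 0) : IndependentOn p N := by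
  intro x
  refine independentOn_of_factorizes hsum (F := fun v y ↦ Real.exp (mll p {v} N y))
    (c := Real.exp (mll p ∅ N x)) (fun v y z hyz ↦ ?_) (fun y ↦ ?_) x
  · exact congrArg Real.exp (dependsOn_mll p {v} N (by simpa using hyz))
  · rw [← Real.exp_log (margin_pos hp N y), log_margin_eq_of_mll_eq_zero h, Real.exp_add,
      Real.exp_sum, dependsOn_mll p ∅ N (x := y) (y := x) (by simp)]

theorem IndependentOn.strictlyCollapsible (h : IndependentOn p N) (hp : ∀ x, 0 < p x)
    (hsum : ∑ x, p x = 1) {M : Finset V} (hMN : M ⊆ N) {b : V} (hb : b ∈ M) :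
    StrictlyCollapsible p N M {b} := by
  refine ⟨fun x ↦ ?_, fun Z _ hZ _ x ↦ h.mll_eq_zero hp ?_ x⟩
  · rw [(h.mono hsum hMN).mll_singleton hp hb, h.mll_singleton hp (hMN hb)]
  · simpa using card_lt_card hZ

theorem StrictlyCollapsible.mll_eq_zero {u v : V}
    (h : StrictlyCollapsible p N (N.erase u) {v}) (huv : u ≠ v) {Z : Finset V} (hZN : Z ⊆ N)
    (hu : u ∈ Z) (hv : v ∈ Z) (x : ∀ v, 𝔛 v) : mll p Z N x = 0 := by
  refine h.2 Z hZN ?_ ⟨u, by simp [hu, hZN hu]⟩ x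
  rw [ssubset_iff_of_subset (singleton_subset_iff.2 hv)]
  exact ⟨u, hu, by simpa using huv⟩

theorem independentOn_triple_iff {i j k : V} (hij : i ≠ j) (hik : i ≠ k) (hjk : j ≠ k) :
    IndependentOn p {i, j, k} ↔
      ∀ x, margin p {i, j, k} x = margin p {i} x * margin p {j} x * margin p {k} x := by
  simp [IndependentOn, hij, hik, hjk, mul_assoc]

theorem stmt16_general (hp : ∀ x, 0 < p x) (hsum : ∑ x, p x = 1) {W : Finset V}
    (hW : #(N \ W) ≤ 1) :
    (∀ w ∈ W, ∀ b ∈ N.erase w, StrictlyCollapsible p N (N.erase w) {b}) ↔ IndependentOn p N := by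
  refine ⟨fun h ↦ independentOn_of_mll_eq_zero hp hsum fun Z hZN hZ ↦ ?_,
    fun h w _ b hb ↦ h.strictlyCollapsible hp hsum (erase_subset w N) hb⟩
  obtain ⟨u, hu, huW⟩ : ∃ u ∈ Z, u ∈ W := by
    by_contra! hZW
    have hZ_sub : Z ⊆ N \ W := fun z hz ↦ mem_sdiff.2 ⟨hZN hz, hZW z hz⟩
    exact hZ.not_ge ((card_le_card hZ_sub).trans hW)
  obtain ⟨v, hv, hvu⟩ := exists_mem_ne hZ u
  exact (h u huW v (mem_erase.2 ⟨hvu, hZN hv⟩)).mll_eq_zero hvu.symm hZN hu hv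

end Independence

theorem stmt16 (p : (∀ v, 𝔛 v) → ℝ) (hp : ∀ x, 0 < p x) (hsum : ∑ x, p x = 1)
    (i j k : V) (hij : i ≠ j) (hik : i ≠ k) (hjk : j ≠ k) :
    (((StrictlyCollapsible p {i, j, k} {j, k} {j} ∧
       StrictlyCollapsible p {i, j, k} {j, k} {k}) ∧
      (StrictlyCollapsible p {i, j, k} {i, k} {i} ∧
       StrictlyCollapsible p {i, j, k} {i, k} {k})) ↔
     (∀ x : ∀ v, 𝔛 v,
       margin p {i, j, k} x = margin p {i} x * margin p {j} x * margin p {k} x)) ∧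
    (((StrictlyCollapsible p {i, j, k} {j, k} {j} ∧
       StrictlyCollapsible p {i, j, k} {j, k} {k}) ∧
      (StrictlyCollapsible p {i, j, k} {i, j} {i} ∧
       StrictlyCollapsible p {i, j, k} {i, j} {j})) ↔
     (∀ x : ∀ v, 𝔛 v,
       margin p {i, j, k} x = margin p {i} x * margin p {j} x * margin p {k} x)) ∧
    (((StrictlyCollapsible p {i, j, k} {i, k} {i} ∧
       StrictlyCollapsible p {i, j, k} {i, k} {k}) ∧
      (StrictlyCollapsible p {i, j, k} {i, j} {i} ∧
       StrictlyCollapsible p {i, j, k} {i, j} {j})) ↔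
     (∀ x : ∀ v, 𝔛 v,
       margin p {i, j, k} x = margin p {i} x * margin p {j} x * margin p {k} x)) := by
  have erase_i : ({i, j, k} : Finset V).erase i = {j, k} := by grind
  have erase_j : ({i, j, k} : Finset V).erase j = {i, k} := by grind
  have erase_k : ({i, j, k} : Finset V).erase k = {i, j} := by grind
  have collapsible_iff {W : Finset V} (hW : #({i, j, k} \ W) ≤ 1) :=
    (stmt16_general hp hsum hW).trans (independentOn_triple_iff hij hik hjk)
  refine ⟨?_, ?_, ?_⟩
  · simpa only [forall_mem_insert, mem_singleton, forall_eq, erase_i, erase_j] using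
      collapsible_iff (W := {i, j}) (card_le_one.2 (by grind))
  · simpa only [forall_mem_insert, mem_singleton, forall_eq, erase_i, erase_k] using
      collapsible_iff (W := {i, k}) (card_le_one.2 (by grind))
  · simpa only [forall_mem_insert, mem_singleton, forall_eq, erase_j, erase_k] using
      collapsible_iff (W := {j, k}) (card_le_one.2 (by grind))
end

section
/- For every L ⊆ M ⊆ V and every x_L ∈ 𝔛_L, the marginal log-linear parameter admits the alternative expression λ_L^M(x_L) = (1/|𝔛_M|) Σ_{y ∈ 𝔛_M} log p_M(y) · ∏_{v ∈ L} (|𝔛_v|·𝟙[x_v = y_v] − 1), where 𝟙 denotes the indicator function; that is, the Möbius-sum definition of λ_L^M and this product formula are equivalent. -/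
/-!
For any function `f` of a configuration, the mean of `f` over the cylinder `{y | y_A = x_A}` is its
mean over all configurations against the product density `∏ v ∈ A, |𝔛 v| 𝟙[x v = y v]`. Averaging
is linear, so the Möbius sum over `A ⊆ L` acts on the densities alone, where it is the expansion of
`∏ v ∈ L, (|𝔛 v| 𝟙[x v = y v] - 1)`. The parameter `λ_L^M` is the case `f = log p_M`.
-/

open Finset

variable {V : Type*} [Fintype V] [DecidableEq V]
variable {𝔛 : V → Type*} [∀ v, Fintype (𝔛 v)] [∀ v, DecidableEq (𝔛 v)]
  [∀ v, Nonempty (𝔛 v)]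

theorem sum_powerset_neg_one_pow_card_sdiff_mul_prod {ι R : Type*} [DecidableEq ι] [CommRing R]
    (s : Finset ι) (g : ι → R) :
    ∑ t ∈ s.powerset, (-1) ^ #(s \ t) * ∏ i ∈ t, g i = ∏ i ∈ s, (g i - 1) := by
  simp only [sub_eq_add_neg, prod_add, prod_const, mul_comm]

/-- The mean of `f` over the cylinder of configurations agreeing with `x` on `A`, whose cardinality
is `∏ v ∈ Aᶜ, |𝔛 v|`. It abstracts `nu` from the function `log p_M`. -/
def cylinderMean {K : Type*} [Field K] (f : (∀ v, 𝔛 v) → K) (A : Finset V) (x : ∀ v, 𝔛 v) : K :=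
  (∏ v ∈ Aᶜ, (Fintype.card (𝔛 v) : K))⁻¹ * ∑ y with ∀ v ∈ A, y v = x v, f y

/-- The interaction term of `f` on the coordinates in `L`, that is, the Möbius inversion of its
cylinder means. It abstracts `mll` from the function `log p_M`. -/
def interaction {K : Type*} [Field K] (f : (∀ v, 𝔛 v) → K) (L : Finset V) (x : ∀ v, 𝔛 v) : K :=
  ∑ A ∈ L.powerset, (-1) ^ #(L \ A) * cylinderMean f A x

theorem cylinderMean_eq_sum_mul_prod {K : Type*} [Field K] [CharZero K] (f : (∀ v, 𝔛 v) → K)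
    (A : Finset V) (x : ∀ v, 𝔛 v) :
    cylinderMean f A x =
      (∏ v, (Fintype.card (𝔛 v) : K))⁻¹ *
        ∑ y, f y * ∏ v ∈ A, ((Fintype.card (𝔛 v) : K) * (if x v = y v then 1 else 0)) := by
  have card_A_ne_zero : ∏ v ∈ A, (Fintype.card (𝔛 v) : K) ≠ 0 :=
    prod_ne_zero_iff.2 fun v _ => Nat.cast_ne_zero.2 Fintype.card_ne_zero
  have prod_density (y : ∀ v, 𝔛 v) :
      ∏ v ∈ A, ((Fintype.card (𝔛 v) : K) * (if x v = y v then 1 else 0)) =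
        if ∀ v ∈ A, y v = x v then ∏ v ∈ A, (Fintype.card (𝔛 v) : K) else 0 := by
    simp [prod_ite_zero, eq_comm]
  have sum_density :
      ∑ y, f y * ∏ v ∈ A, ((Fintype.card (𝔛 v) : K) * (if x v = y v then 1 else 0)) =
        (∏ v ∈ A, (Fintype.card (𝔛 v) : K)) * ∑ y with ∀ v ∈ A, y v = x v, f y := by
    simp_rw [prod_density, mul_ite, mul_zero, ← sum_filter, ← sum_mul, mul_comm]
  rw [cylinderMean, sum_density, ← prod_mul_prod_compl A, mul_inv_rev, mul_assoc,
    inv_mul_cancel_left₀ card_A_ne_zero]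

theorem stmt19_general {K : Type*} [Field K] [CharZero K] (f : (∀ v, 𝔛 v) → K) (L : Finset V)
    (x : ∀ v, 𝔛 v) :
    interaction f L x =
      (∏ v, (Fintype.card (𝔛 v) : K))⁻¹ *
        ∑ y, f y * ∏ v ∈ L, ((Fintype.card (𝔛 v) : K) * (if x v = y v then 1 else 0) - 1) := by
  let density (y : ∀ v, 𝔛 v) (v : V) : K := Fintype.card (𝔛 v) * (if x v = y v then 1 else 0)
  let N : K := ∏ v, (Fintype.card (𝔛 v) : K)
  calc
    interaction f L x =
        ∑ A ∈ L.powerset, (-1) ^ #(L \ A) * (N⁻¹ * ∑ y, f y * ∏ v ∈ A, density y v) := by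
      simp only [interaction, cylinderMean_eq_sum_mul_prod, N, density]
    _ = N⁻¹ * ∑ y, f y * ∑ A ∈ L.powerset, (-1) ^ #(L \ A) * ∏ v ∈ A, density y v := by
      simp only [mul_sum, sum_comm (s := univ), mul_left_comm]
    _ = N⁻¹ * ∑ y, f y * ∏ v ∈ L, (density y v - 1) := by
      simp only [sum_powerset_neg_one_pow_card_sdiff_mul_prod]

theorem stmt19 (p : (∀ v, 𝔛 v) → ℝ) (hp : ∀ x, 0 < p x) (hsum : ∑ x, p x = 1)
    (L M : Finset V) (hLM : L ⊆ M) (x : ∀ v, 𝔛 v) :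
    mll p L M x =
      (∏ v : V, (Fintype.card (𝔛 v) : ℝ))⁻¹ *
        ∑ y : ∀ v, 𝔛 v, Real.log (margin p M y) *
          ∏ v ∈ L, ((Fintype.card (𝔛 v) : ℝ) * (if x v = y v then 1 else 0) - 1) := by
  have mll_eq_interaction : mll p L M x = interaction (fun y => Real.log (margin p M y)) L x := rfl
  rw [mll_eq_interaction, stmt19_general]
end
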